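/- Under the Pearlian semantics, probabilities of counterfactuals in nondeterministic causal models are not identified by the observational and interventional distributions: let M be the causal model with binary endogenous X and Y, graph X → Y, P(Y=1 | X=1) = p and P(Y=1 | X=0) = q with 0 < p < q < 1, p + q ≤ 1, and P(X=1, Y=1) > 0. Let M' be the canonical SCM of M with P(U_Y = 0) = p, P(U_Y = 1) = q, P(U_Y = 2) = 1 − p − q, P(U_Y = 3) = 0, and let M'' be the canonical SCM with P(U_Y = 0) = 0, P(U_Y = 1) = q − p, P(U_Y = 2) = 1 − q, P(U_Y = 3) = p. Then both M' and M'' are canonical SCMs for M, yet P_{M'}((Y=0)_{X←0} | X=1, Y=1) = 1 while P_{M''}((Y=0)_{X←0} | X=1, Y=1) = 0. -/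

import Mathlib

/-!
Given the values `v` of all the original variables, a response variable `U_X` of a canonical SCM
follows its prior conditioned on mapping the actual value of `Pa_X` to the actual value of `X`.
Given `X = 1` and `Y = 1`, the response function of `Y` is therefore `Y = X` or `Y = 1`, and
`(Y = 0)_{X ← 0}` holds exactly in the first case, so its conditional probability is
`P(U_Y = 0) / p`. The constraints `P(U_Y = 0) + P(U_Y = 3) = p` and `P(U_Y = 1) + P(U_Y = 3) = q`
do not determine how the mass `p` is split between `U_Y = 0` and `U_Y = 3`: the first model puts
all of it on `U_Y = 0`, the second all of it on `U_Y = 3`.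
-/

open Finset

noncomputable section

attribute [local instance] Classical.propDecidable

/-- An assignment of values to the variables. -/
abbrev Asg {ν : Type} (Val : ν → Type) : Type := (i : ν) → Val i

/-- A probabilistic causal model (a causal Bayesian network with explicit exogenous
variables): a signature (variables `ν` with value sets `Val`), a graph given by the
parent map `pa` (with `ord` a witness of acyclicity, and the variables in `exo` being
the roots), and a joint probability distribution that is Markov relative to the graph,
presented by the conditional probability table `cpt i w x = P(i = x | pa i = w|_{pa i})`
of each variable given its parents (for exogenous variables this is the marginal). -/
structure CM (ν : Type) (Val : ν → Type) : Type where
  exo : Finset ν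
  pa : ν → Finset ν
  ord : ν → ℕ
  cpt : (i : ν) → Asg Val → Val i → ℝ

/-- A basic counterfactual event `(Y = yv)_{X ← xv}`. -/
structure CFEvent (ν : Type) (Val : ν → Type) : Type where
  X : Finset ν
  xv : Asg Val
  Y : Finset ν
  yv : Asg Val

namespace CM

variable {ν : Type} {Val : ν → Type}

/-- Well-formedness of a causal model: exogenous variables are roots, the graph is
acyclic, the conditional probability table of each variable depends only on its
parents, and each table is a probability distribution. -/
structure WF [Fintype ν] [∀ i, Fintype (Val i)] (M : CM ν Val) : Prop where
  pa_exo : ∀ i ∈ M.exo, M.pa i = ∅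
  acyclic : ∀ i j, j ∈ M.pa i → M.ord j < M.ord i
  cpt_pa : ∀ (i : ν) (w w' : Asg Val) (x : Val i),
    (∀ j ∈ M.pa i, w j = w' j) → M.cpt i w x = M.cpt i w' x
  cpt_nonneg : ∀ i w x, 0 ≤ M.cpt i w x
  cpt_sum : ∀ i w, ∑ x, M.cpt i w x = 1

variable [Fintype ν] [∀ i, Fintype (Val i)] [∀ i, Nonempty (Val i)]

variable (M : CM ν Val)

/-- The joint distribution `P(U = u, V = v)` (Markov factorization). -/
def joint (w : Asg Val) : ℝ := ∏ i, M.cpt i w (w i)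

/-- The interventional distribution `P_{do(X = xv)}` (truncated factorization). -/
def pdo (X : Finset ν) (xv w : Asg Val) : ℝ :=
  if ∀ i ∈ X, w i = xv i then ∏ i ∈ Xᶜ, M.cpt i w (w i) else 0

/-- `P_{do(X = xv)}(Y = yv | U = u)`, where `u` is the exogenous part of `w`:
the probability of the basic counterfactual `(Y = yv)_{X ← xv}` given the world `w`. -/
def cfBasic (X : Finset ν) (xv : Asg Val) (Y : Finset ν) (yv : Asg Val) (w : Asg Val) : ℝ :=
  (∑ w' : Asg Val,
      if (∀ i ∈ M.exo, w' i = w i) ∧ ∀ i ∈ Y, w' i = yv i then M.pdo X xv w' else 0) /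
  (∑ w' : Asg Val, if ∀ i ∈ M.exo, w' i = w i then M.pdo X xv w' else 0)

/-- The probability of a complex counterfactual
`P(y_x, …, z_w) = Σ_{(u,v)} P(y_x | u,v) ⋯ P(z_w | u,v) P(u,v)`. -/
def cfProb (evs : List (CFEvent ν Val)) : ℝ :=
  ∑ w : Asg Val, (evs.map fun e => M.cfBasic e.X e.xv e.Y e.yv w).prod * M.joint w

/-- Conditional probability of a complex counterfactual given an actual event `Z = zv`:
`P(y_x, …, z_w | Z = zv) = P(y_x, …, z_w, Z = zv) / P(Z = zv)`. -/
def cfProbCond (evs : List (CFEvent ν Val)) (Z : Finset ν) (zv : Asg Val) : ℝ :=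
  (∑ w : Asg Val,
      (if ∀ i ∈ Z, w i = zv i then (evs.map fun e => M.cfBasic e.X e.xv e.Y e.yv w).prod
       else 0) * M.joint w) /
  (∑ w : Asg Val, if ∀ i ∈ Z, w i = zv i then M.joint w else 0)

/-- `M` is a structural causal model: every endogenous variable is a deterministic
function of its parents (the exogenous variables are automatically mutually
independent in this presentation). -/
def IsSCM : Prop :=
  ∀ i ∉ M.exo, ∀ (w : Asg Val) (x : Val i), M.cpt i w x = 0 ∨ M.cpt i w x = 1

/-- The actualized refinement `M^{(u,v)}` of `M` at the actual world `a`: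
for each endogenous variable, the conditional distribution given the *actual* values of
its parents is replaced by the point mass at the actual value of the variable. -/
def refine (a : Asg Val) : CM ν Val where
  exo := M.exo
  pa := M.pa
  ord := M.ord
  cpt := fun i w x =>
    if i ∉ M.exo ∧ ∀ j ∈ M.pa i, w j = a j then (if x = a i then 1 else 0)
    else M.cpt i w x

/-- The B-semantics probability of a basic counterfactual,
`P^B((Y = yv)_{X ← xv} | a) = (P^{a})_{do(X = xv)}(Y = yv | U = u)` where `u` is the
exogenous part of the actual world `a`. -/
def pbBasic (a : Asg Val) (X : Finset ν) (xv : Asg Val) (Y : Finset ν) (yv : Asg Val) : ℝ :=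
  (M.refine a).cfBasic X xv Y yv a

/-- The B-semantics probability of a complex counterfactual. -/
def pbProb (evs : List (CFEvent ν Val)) : ℝ :=
  ∑ w : Asg Val, (evs.map fun e => M.pbBasic w e.X e.xv e.Y e.yv).prod * M.joint w

/-- The conditional B-semantics probability of a complex counterfactual given `Z = zv`. -/
def pbProbCond (evs : List (CFEvent ν Val)) (Z : Finset ν) (zv : Asg Val) : ℝ :=
  (∑ w : Asg Val,
      (if ∀ i ∈ Z, w i = zv i then (evs.map fun e => M.pbBasic w e.X e.xv e.Y e.yv).prod
       else 0) * M.joint w) /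
  (∑ w : Asg Val, if ∀ i ∈ Z, w i = zv i then M.joint w else 0)

/-- An assignment of values to the parents of `i`. -/
def PaAsg (i : ν) : Type := (j : {j : ν // j ∈ M.pa i}) → Val j.1

instance (i : ν) : Fintype (M.PaAsg i) := by unfold PaAsg; infer_instance
instance (i : ν) : Nonempty (M.PaAsg i) := ⟨fun j => Classical.arbitrary (Val j.1)⟩

/-- Extend an assignment of the parents of `i` to a full assignment (arbitrarily). -/
def extendPa (i : ν) (κ : M.PaAsg i) : Asg Val :=
  fun j => if h : j ∈ M.pa i then κ ⟨j, h⟩ else Classical.arbitrary (Val j)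

/-- The index type of the potential outcome variables `X_{pa_X}` of the PO-SCM:
one for each endogenous variable `X` and each value `pa_X` of its parents. -/
def POI : Type := Σ i : {i : ν // i ∉ M.exo}, M.PaAsg i.1

instance : Fintype (POI M) := by unfold POI; infer_instance

/-- The value set of the potential outcome variable `X_{pa_X}` is that of `X`. -/
def POB : POI M → Type := fun p => Val p.1.1

instance (p : POI M) : Fintype (POB M p) := by unfold POB; infer_instance
instance (p : POI M) : Nonempty (POB M p) := by unfold POB; infer_instance

/-- The type of values of the response variable `U_X` of the canonical frame:
functions from values of the parents of `X` to values of `X`. -/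
def RType (i : ν) : Type := M.PaAsg i → Val i

instance (i : ν) : Fintype (M.RType i) := by unfold RType; infer_instance
instance (i : ν) : Nonempty (M.RType i) := ⟨fun _ => Classical.arbitrary (Val i)⟩

/-- The index type of the response variables of the canonical frame:
one for each endogenous variable. -/
def RVI : Type := {i : ν // i ∉ M.exo}

instance : Fintype (RVI M) := by unfold RVI; infer_instance

/-- The value set of the response variable `U_X`. -/
def RB : RVI M → Type := fun p => M.RType p.1

instance (p : RVI M) : Fintype (RB M p) := by unfold RB; infer_instance
instance (p : RVI M) : Nonempty (RB M p) := by unfold RB; infer_instance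

end CM

/-- The family of value sets of an extended signature `ν ⊕ β`. -/
def SumVal {ν β : Type} (Val : ν → Type) (B : β → Type) : ν ⊕ β → Type := fun i =>
  match i with
  | .inl j => Val j
  | .inr b => B b

section SumValInst

variable {ν β : Type} {Val : ν → Type} {B : β → Type}

instance [∀ i, Fintype (Val i)] [∀ b, Fintype (B b)] (i : ν ⊕ β) :
    Fintype (SumVal Val B i) := by
  cases i with
  | inl j => exact inferInstanceAs (Fintype (Val j))
  | inr b => exact inferInstanceAs (Fintype (B b))

instance [∀ i, Nonempty (Val i)] [∀ b, Nonempty (B b)] (i : ν ⊕ β) :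
    Nonempty (SumVal Val B i) := by
  cases i with
  | inl j => exact inferInstanceAs (Nonempty (Val j))
  | inr b => exact inferInstanceAs (Nonempty (B b))

/-- Lift an assignment on `ν` to one on `ν ⊕ β` (arbitrary on the new variables). -/
def liftAsg [∀ b, Nonempty (B b)] (xv : Asg Val) : Asg (SumVal Val B) := fun i =>
  match i with
  | .inl j => xv j
  | .inr b => Classical.arbitrary (B b)

/-- Lift a counterfactual event on the original variables to the extended signature. -/
def liftCFEvent [∀ b, Nonempty (B b)] (e : CFEvent ν Val) : CFEvent (ν ⊕ β) (SumVal Val B) :=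
  ⟨e.X.image Sum.inl, liftAsg e.xv, e.Y.image Sum.inl, liftAsg e.yv⟩

variable [Fintype ν] [Fintype β] [∀ i, Fintype (Val i)] [∀ b, Fintype (B b)]
  [∀ i, Nonempty (Val i)] [∀ b, Nonempty (B b)]

/-- The probability, computed in a model `N` over an extended signature, of a complex
counterfactual over the original variables. -/
def extProb (N : CM (ν ⊕ β) (SumVal Val B)) (evs : List (CFEvent ν Val)) : ℝ :=
  N.cfProb (evs.map liftCFEvent)

/-- The probability, computed in a model `N` over an extended signature, of a complex
counterfactual over the original variables, conditional on an actual event `Z = zv`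
over the original variables. -/
def extProbCond (N : CM (ν ⊕ β) (SumVal Val B)) (evs : List (CFEvent ν Val))
    (Z : Finset ν) (zv : Asg Val) : ℝ :=
  N.cfProbCond (evs.map liftCFEvent) (Z.image Sum.inl) (liftAsg zv)

/-- The probability, computed in a model `N` over an extended signature, of a basic
counterfactual conditional on the values `a` of *all* the original variables
(marginalizing over the added exogenous variables), via the law of total probability. -/
def extBasicCond (N : CM (ν ⊕ β) (SumVal Val B)) (a : Asg Val)
    (X : Finset ν) (xv : Asg Val) (Y : Finset ν) (yv : Asg Val) : ℝ :=
  (∑ w : Asg (SumVal Val B),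
      if ∀ i : ν, w (Sum.inl i) = a i then
        N.cfBasic (X.image Sum.inl) (liftAsg xv) (Y.image Sum.inl) (liftAsg yv) w * N.joint w
      else 0) /
  (∑ w : Asg (SumVal Val B), if ∀ i : ν, w (Sum.inl i) = a i then N.joint w else 0)

end SumValInst

namespace CM

variable {ν : Type} {Val : ν → Type} [Fintype ν] [∀ i, Fintype (Val i)] [∀ i, Nonempty (Val i)]
variable (M : CM ν Val)

/-- The PO-SCM `M^N` of `M`: the structural causal model obtained from `M` by adding,
for each endogenous variable `X` and each value `pa_X` of its parents, an exogenous
potential outcome variable `X_{pa_X}` (with marginal `P_M(X | Pa_X = pa_X)`, all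
exogenous variables mutually independent), and the structural equation
`X = X_{pa_X}` whenever `Pa_X = pa_X`. -/
def MN : CM (ν ⊕ POI M) (SumVal Val (POB M)) where
  exo := (M.exo.image Sum.inl) ∪ (univ.image Sum.inr)
  pa := fun i =>
    match i with
    | .inl j => ((M.pa j).image Sum.inl) ∪
        ((univ.filter fun p : POI M => p.1.1 = j).image Sum.inr)
    | .inr _ => ∅
  ord := fun i =>
    match i with
    | .inl j => M.ord j + 1
    | .inr _ => 0
  cpt := fun i =>
    match i with
    | .inl j => fun w x =>
        if h : j ∈ M.exo then M.cpt j (fun k => w (Sum.inl k)) x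
        else if x = w (Sum.inr ⟨⟨j, h⟩, fun k => w (Sum.inl k.1)⟩) then 1 else 0
    | .inr p => fun _ x => M.cpt p.1.1 (M.extendPa p.1.1 p.2) x

/-- `P^N(y_x, …, z_w)`: the probability of a complex counterfactual computed in the
PO-SCM `M^N`. -/
def pnProb (evs : List (CFEvent ν Val)) : ℝ := extProb M.MN evs

/-- `P^N(y_x, …, z_w | Z = zv)`: the conditional probability of a complex
counterfactual computed in the PO-SCM `M^N`, given an actual event on the
endogenous variables. -/
def pnProbCond (evs : List (CFEvent ν Val)) (Z : Finset ν) (zv : Asg Val) : ℝ :=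
  extProbCond M.MN evs Z zv

/-- `P^N((Y = yv)_{X ← xv} | U = u, V = v)`: the probability of a basic counterfactual
computed in the PO-SCM `M^N`, conditional on the exogenous and endogenous variables of
`M` only (marginalizing over the potential outcome variables). -/
def pnBasicCond (a : Asg Val) (X : Finset ν) (xv : Asg Val) (Y : Finset ν) (yv : Asg Val) : ℝ :=
  extBasicCond M.MN a X xv Y yv

/-- A canonical SCM for `M`, determined by a distribution `q` of the response variables:
the SCM over the canonical frame, which adds for each endogenous variable `X` an
exogenous response variable `U_X` ranging over the functions `f_X : R(Pa_X) → R(X)`,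
with the structural equation `X = f_X(Pa_X)` where `f_X` is the value of `U_X`. -/
def canonSCM (q : (p : RVI M) → RType M p.1 → ℝ) : CM (ν ⊕ RVI M) (SumVal Val (RB M)) where
  exo := (M.exo.image Sum.inl) ∪ (univ.image Sum.inr)
  pa := fun i =>
    match i with
    | .inl j => ((M.pa j).image Sum.inl) ∪
        ((univ.filter fun p : RVI M => p.1 = j).image Sum.inr)
    | .inr _ => ∅
  ord := fun i =>
    match i with
    | .inl j => M.ord j + 1
    | .inr _ => 0
  cpt := fun i =>
    match i with
    | .inl j => fun w x =>
        if h : j ∈ M.exo then M.cpt j (fun k => w (Sum.inl k)) x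
        else if x = w (Sum.inr ⟨j, h⟩) (fun k => w (Sum.inl k.1)) then 1 else 0
    | .inr p => fun _ x => q p x

/-- `q` is the distribution of the response variables of a canonical SCM for `M`:
it is a probability distribution (the response variables being mutually independent and
independent of the exogenous variables of `M`, whose distribution is kept), and it
reproduces the conditional probability tables of `M`:
`P_M(X = x | Pa_X = pa_X) = Σ_{f_X with f_X(pa_X) = x} P(U_X = f_X)`. -/
def IsCanonicalDist (q : (p : RVI M) → RType M p.1 → ℝ) : Prop :=
  (∀ p x, 0 ≤ q p x) ∧ (∀ p, ∑ f, q p f = 1) ∧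
  ∀ (p : RVI M) (κ : M.PaAsg p.1) (x : Val p.1),
    M.cpt p.1 (M.extendPa p.1 κ) x = ∑ f ∈ univ.filter (fun f : RType M p.1 => f κ = x), q p f

/-- The distribution of the response variables of the GH-SCM:
`P(U_X = f_X) = ∏_{pa_X} P_M(X = f_X(pa_X) | Pa_X = pa_X)`. -/
def qGH : (p : RVI M) → RType M p.1 → ℝ := fun p f =>
  ∏ κ : M.PaAsg p.1, M.cpt p.1 (M.extendPa p.1 κ) (f κ)

end CM

/-- A default assignment. -/
def dfltAsg {ν : Type} (Val : ν → Type) [∀ i, Nonempty (Val i)] : Asg Val :=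
  fun i => Classical.arbitrary (Val i)

/-- The causal model of Example 2: binary endogenous variables `X` (index `false`) and
`Y` (index `true`) with graph `X → Y`, `P(X=1) = px1`, `P(Y=1 | X=1) = p` and
`P(Y=1 | X=0) = q` (the exogenous variables determining `X` are left implicit:
`X` has no parents). Values: `true` is `1`, `false` is `0`. -/
def M2 (p q px1 : ℝ) : CM Bool (fun _ => Bool) where
  exo := ∅
  pa := fun i => match i with
    | false => ∅
    | true => {false}
  ord := fun i => match i with
    | false => 0
    | true => 1
  cpt := fun i => match i with
    | false => fun _ b => if b then px1 else 1 - px1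
    | true => fun w b =>
        if w false then (if b then p else 1 - p) else (if b then q else 1 - q)

/-- The response variable `U_Y` of the canonical frame of `M2`. -/
def yRVI (p q px1 : ℝ) : CM.RVI (M2 p q px1) :=
  ⟨true, by show true ∉ (∅ : Finset Bool); simp⟩

/-- The unique parent of `Y` in `M2`, as an element of the index type of the values of
the parents of `Y`. -/
def xPa (p q px1 : ℝ) : {j : Bool // j ∈ (M2 p q px1).pa true} :=
  ⟨false, by show false ∈ ({false} : Finset Bool); simp⟩

/-- `U_Y = 0`: `Y = X`. -/
def fId (p q px1 : ℝ) : CM.RType (M2 p q px1) true := fun κ => κ (xPa p q px1)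

/-- `U_Y = 1`: `Y = ¬X`. -/
def fNeg (p q px1 : ℝ) : CM.RType (M2 p q px1) true := fun κ => !(κ (xPa p q px1))

/-- `U_Y = 2`: `Y = 0`. -/
def fC0 (p q px1 : ℝ) : CM.RType (M2 p q px1) true := fun _ => false

/-- `U_Y = 3`: `Y = 1`. -/
def fC1 (p q px1 : ℝ) : CM.RType (M2 p q px1) true := fun _ => true

lemma sum_filter_mem_prod_mul_sum {ι R : Type*} {κ : ι → Type*} [Fintype ι] [∀ i, Fintype (κ i)]
    [CommSemiring R] (g : (i : ι) → κ i → R) (i : ι) (t : Finset (κ i)) :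
    (∑ f : (j : ι) → κ j with f i ∈ t, ∏ j, g j (f j)) * ∑ x, g i x =
      (∑ x ∈ t, g i x) * ∏ j, ∑ x, g j x := by
  have hfilter : ({f : (j : ι) → κ j | f i ∈ t} : Finset _) =
      Fintype.piFinset (Function.update (fun _ => univ) i t) := by
    rw [Fintype.piFinset_update_eq_filter_piFinset_mem _ _ (Finset.subset_univ t),
      Fintype.piFinset_univ]
  have hcompl : ∏ j ∈ univ.erase i, ∑ x ∈ Function.update (fun _ => univ) i t j, g j x =
      ∏ j ∈ univ.erase i, ∑ x, g j x :=
    Finset.prod_congr rfl fun j hj => by rw [Function.update_of_ne (Finset.ne_of_mem_erase hj)]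
  rw [hfilter, ← Finset.prod_univ_sum, ← Finset.mul_prod_erase univ _ (Finset.mem_univ i),
    ← Finset.mul_prod_erase univ (fun j => ∑ x, g j x) (Finset.mem_univ i), hcompl,
    Function.update_self]
  ring

section Gluing

variable {ν β : Type} {Val : ν → Type} {B : β → Type}

/-- The world of an extended signature with values `v` of the original variables and `u` of the
added ones. -/
def glue (v : Asg Val) (u : Asg B) : Asg (SumVal Val B)
  | .inl i => v i
  | .inr b => u b

lemma sum_eq_sum_sum_glue {_ : Fintype (Asg (SumVal Val B))} [Fintype (Asg Val)] [Fintype (Asg B)]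
    (F : Asg (SumVal Val B) → ℝ) : ∑ w, F w = ∑ v, ∑ u, F (glue v u) := by
  rw [← Fintype.sum_prod_type' (fun v u => F (glue v u))]
  let e : Asg (SumVal Val B) ≃ Asg Val × Asg B := Equiv.sumPiEquivProdPi _
  refine Fintype.sum_equiv e _ _ fun w => congrArg F ?_
  funext i
  cases i <;> rfl

end Gluing

namespace CM

section Worlds

variable {ν : Type} {Val : ν → Type} [Fintype ν] {M : CM ν Val}

lemma joint_ne_zero_iff {w : Asg Val} : M.joint w ≠ 0 ↔ ∀ i, M.cpt i w (w i) ≠ 0 := by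
  simp [joint, Finset.prod_ne_zero_iff]

lemma pdo_ne_zero_iff {X : Finset ν} {xv w : Asg Val} :
    M.pdo X xv w ≠ 0 ↔ (∀ i ∈ X, w i = xv i) ∧ ∀ i ∉ X, M.cpt i w (w i) ≠ 0 := by
  simp [pdo, Finset.prod_ne_zero_iff]

variable [∀ i, Fintype (Val i)]

lemma WF.eq_of_cpt_ne_zero (hM : M.WF) (hSCM : M.IsSCM) {i : ν} (hi : i ∉ M.exo) {w : Asg Val}
    {x y : Val i} (hx : M.cpt i w x ≠ 0) (hy : M.cpt i w y ≠ 0) : x = y := by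
  by_contra hxy
  have hle : ∑ z ∈ {x, y}, M.cpt i w z ≤ ∑ z, M.cpt i w z :=
    Finset.sum_le_univ_sum_of_nonneg (hM.cpt_nonneg i w)
  rw [Finset.sum_pair hxy, hM.cpt_sum, (hSCM i hi w x).resolve_left hx,
    (hSCM i hi w y).resolve_left hy] at hle
  norm_num at hle

lemma WF.eq_of_pdo_ne_zero (hM : M.WF) (hSCM : M.IsSCM) {X : Finset ν} {xv s t : Asg Val}
    (hs : M.pdo X xv s ≠ 0) (ht : M.pdo X xv t ≠ 0) (hst : ∀ i ∈ M.exo, s i = t i) : s = t := by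
  rw [pdo_ne_zero_iff] at hs ht
  have agree : ∀ n i, M.ord i = n → s i = t i := by
    intro n
    induction n using Nat.strong_induction_on with
    | _ n ih =>
      rintro i rfl
      by_cases hi : i ∈ M.exo
      · exact hst i hi
      by_cases hX : i ∈ X
      · rw [hs.1 i hX, ht.1 i hX]
      have hpa : ∀ j ∈ M.pa i, s j = t j := fun j hj => ih _ (hM.acyclic i j hj) j rfl
      refine hM.eq_of_cpt_ne_zero hSCM hi (hs.2 i hX) ?_
      rw [hM.cpt_pa i s t _ hpa]
      exact ht.2 i hX
  exact funext fun i => agree _ i rfl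

lemma WF.cfBasic_eq_ite (hM : M.WF) (hSCM : M.IsSCM) {X Y : Finset ν} {xv yv w s : Asg Val}
    (hs : M.pdo X xv s ≠ 0) (hsw : ∀ i ∈ M.exo, s i = w i) :
    M.cfBasic X xv Y yv w = if ∀ i ∈ Y, s i = yv i then 1 else 0 := by
  have pdo_eq_zero : ∀ t, t ≠ s → (∀ i ∈ M.exo, t i = w i) → M.pdo X xv t = 0 := by
    intro t hts htw
    by_contra ht
    exact hts (hM.eq_of_pdo_ne_zero hSCM ht hs fun i hi => (htw i hi).trans (hsw i hi).symm)
  rw [cfBasic, Fintype.sum_eq_single s, Fintype.sum_eq_single s, if_pos hsw]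
  · split_ifs with h h' h'
    · exact div_self hs
    · exact absurd h.2 h'
    · exact absurd ⟨hsw, h'⟩ h
    · exact zero_div _
  · exact fun t hts => ite_eq_right_iff.2 fun h => pdo_eq_zero t hts h
  · exact fun t hts => ite_eq_right_iff.2 fun h => pdo_eq_zero t hts h.1

end Worlds

section Parents

variable {ν : Type} {Val : ν → Type}

/-- The values `pa_X` that the world `v` gives to the parents of `i`. -/
def restrictPa (M : CM ν Val) (i : ν) (v : Asg Val) : M.PaAsg i := fun k => v k

lemma restrictPa_congr {M : CM ν Val} {i : ν} {v v' : Asg Val} (h : ∀ j ∈ M.pa i, v j = v' j) :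
    M.restrictPa i v = M.restrictPa i v' :=
  funext fun k => h k k.2

end Parents

section CanonicalSCM

variable {ν : Type} {Val : ν → Type} [Fintype ν] {M : CM ν Val}
  {q : (p : RVI M) → RType M p.1 → ℝ}

lemma canonSCM_cpt_inl_of_mem {j : ν} (hj : j ∈ M.exo) (w : Asg (SumVal Val (RB M)))
    (x : SumVal Val (RB M) (.inl j)) :
    (M.canonSCM q).cpt (.inl j) w x = M.cpt j (fun k => w (.inl k)) x :=
  dif_pos hj

lemma canonSCM_cpt_inl_RVI (p : RVI M) (w : Asg (SumVal Val (RB M)))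
    (x : SumVal Val (RB M) (.inl p.1)) :
    (M.canonSCM q).cpt (.inl p.1) w x =
      if x = (w (.inr p) : RType M p.1) (M.restrictPa p.1 fun i => w (.inl i)) then 1 else 0 :=
  dif_neg p.2

lemma inl_mem_canonSCM_exo {j : ν} : .inl j ∈ (M.canonSCM q).exo ↔ j ∈ M.exo := by
  simp [canonSCM]

lemma inr_mem_canonSCM_exo (p : RVI M) : .inr p ∈ (M.canonSCM q).exo := by
  simp [canonSCM]

lemma isSCM_canonSCM : (M.canonSCM q).IsSCM := by
  rintro (j | p) hj w x
  · rw [inl_mem_canonSCM_exo] at hj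
    rw [canonSCM_cpt_inl_RVI ⟨j, hj⟩]
    exact (ite_eq_or_eq _ _ _).symm
  · exact absurd (inr_mem_canonSCM_exo p) hj

lemma prod_exo_mul_prod_RVI (F : ν → ℝ) : (∏ i ∈ M.exo, F i) * ∏ p : RVI M, F p.1 = ∏ i, F i := by
  rw [← Finset.prod_mul_prod_compl M.exo]
  congr 1
  exact (Finset.prod_subtype M.exoᶜ (fun _ => Finset.mem_compl) F).symm

lemma joint_canonSCM_glue (v : Asg Val) (u : Asg (RB M)) :
    (M.canonSCM q).joint (glue v u) =
      (∏ i ∈ M.exo, M.cpt i v (v i)) *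
        ∏ p : RVI M, if v p.1 = u p (M.restrictPa p.1 v) then q p (u p) else 0 := by
  have hendo (p : RVI M) :
      (M.canonSCM q).cpt (.inl p.1) (glue v u) (v p.1) * q p (u p) =
        if v p.1 = u p (M.restrictPa p.1 v) then q p (u p) else 0 :=
    (congrArg (· * q p (u p)) (canonSCM_cpt_inl_RVI p _ _)).trans (by
      rw [ite_mul, one_mul, zero_mul]
      rfl)
  calc (M.canonSCM q).joint (glue v u)
      = (∏ i, (M.canonSCM q).cpt (.inl i) (glue v u) (v i)) * ∏ p, q p (u p) :=
        Fintype.prod_sum_type _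
    _ = (∏ i ∈ M.exo, (M.canonSCM q).cpt (.inl i) (glue v u) (v i)) *
          ∏ p : RVI M, (M.canonSCM q).cpt (.inl p.1) (glue v u) (v p.1) * q p (u p) := by
        rw [← prod_exo_mul_prod_RVI, mul_assoc, Finset.prod_mul_distrib]
    _ = _ := by
        congr 1
        · exact Finset.prod_congr rfl fun i hi => canonSCM_cpt_inl_of_mem hi _ _
        · exact Finset.prod_congr rfl fun p _ => hendo p

variable [∀ i, Fintype (Val i)] [∀ i, Nonempty (Val i)]

lemma WF.cpt_extendPa (hM : M.WF) (i : ν) (v : Asg Val) (x : Val i) :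
    M.cpt i (M.extendPa i (M.restrictPa i v)) x = M.cpt i v x :=
  hM.cpt_pa i _ _ x fun j hj => by simp [extendPa, restrictPa, hj]

lemma WF.canonSCM (hM : M.WF) (hq : M.IsCanonicalDist q) : (M.canonSCM q).WF where
  pa_exo := by
    rintro (j | p) hj
    · rw [inl_mem_canonSCM_exo] at hj
      have : ∀ p : RVI M, p.1 ≠ j := by
        rintro p rfl
        exact p.2 hj
      simp [CM.canonSCM, hM.pa_exo j hj, this]
    · rfl
  acyclic := by
    rintro (i | p) (j | r) h
    · exact Nat.succ_lt_succ (hM.acyclic i j (by simpa [CM.canonSCM] using h))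
    · exact Nat.succ_pos _
    · simp [CM.canonSCM] at h
    · simp [CM.canonSCM] at h
  cpt_pa := by
    rintro (j | p) w w' x h
    · have hpa : ∀ k ∈ M.pa j, w (.inl k) = w' (.inl k) := fun k hk =>
        h _ (by simp [CM.canonSCM, hk])
      by_cases hj : j ∈ M.exo
      · rw [canonSCM_cpt_inl_of_mem hj, canonSCM_cpt_inl_of_mem hj]
        exact hM.cpt_pa j _ _ x hpa
      · have hresp : w (.inr ⟨j, hj⟩) = w' (.inr ⟨j, hj⟩) := h _ <| by
          simpa [CM.canonSCM] using ⟨_, rfl, rfl⟩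
        rw [canonSCM_cpt_inl_RVI ⟨j, hj⟩, canonSCM_cpt_inl_RVI ⟨j, hj⟩, hresp, restrictPa_congr hpa]
    · rfl
  cpt_nonneg := by
    rintro (j | p) w x
    · by_cases hj : j ∈ M.exo
      · rw [canonSCM_cpt_inl_of_mem hj]
        exact hM.cpt_nonneg _ _ _
      · rw [canonSCM_cpt_inl_RVI ⟨j, hj⟩]
        split_ifs <;> norm_num
    · exact hq.1 p x
  cpt_sum := by
    rintro (j | p) w
    · by_cases hj : j ∈ M.exo
      · exact (Finset.sum_congr rfl fun x _ => canonSCM_cpt_inl_of_mem hj w x).trans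
          (hM.cpt_sum _ _)
      · refine (Finset.sum_congr rfl fun x _ => canonSCM_cpt_inl_RVI ⟨j, hj⟩ w x).trans ?_
        exact Fintype.sum_ite_eq' _ _
    · exact hq.2.1 p

lemma IsCanonicalDist.sum_response_eq (hq : M.IsCanonicalDist q) (hM : M.WF) (p : RVI M)
    (v : Asg Val) :
    ∑ f : RType M p.1, (if v p.1 = f (M.restrictPa p.1 v) then q p f else 0) =
      M.cpt p.1 v (v p.1) := by
  refine Eq.trans ?_ ((hq.2.2 p _ _).symm.trans (hM.cpt_extendPa p.1 v (v p.1)))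
  simp only [Finset.sum_filter, eq_comm]

lemma IsCanonicalDist.sum_joint_eq (hq : M.IsCanonicalDist q) (hM : M.WF) (v : Asg Val) :
    ∑ u : Asg (RB M), (M.canonSCM q).joint (glue v u) = M.joint v := by
  simp only [joint_canonSCM_glue]
  rw [← Finset.mul_sum, joint, ← prod_exo_mul_prod_RVI (M := M)]
  have hprod := Fintype.prod_sum fun (p : RVI M) (f : RB M p) =>
    if v p.1 = f (M.restrictPa p.1 v) then q p f else 0
  refine congrArg _ (hprod.symm.trans ?_)
  exact Finset.prod_congr rfl fun p _ => hq.sum_response_eq hM p v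

lemma IsCanonicalDist.sum_joint_mul_cpt (hq : M.IsCanonicalDist q) (hM : M.WF) (v : Asg Val)
    (p : RVI M) (T : Finset (RB M p)) :
    (∑ u : Asg (RB M) with u p ∈ T, (M.canonSCM q).joint (glue v u)) * M.cpt p.1 v (v p.1) =
      M.joint v * ∑ f ∈ T with f (M.restrictPa p.1 v) = v p.1, q p f := by
  have hindep := sum_filter_mem_prod_mul_sum
    (fun (r : RVI M) (f : RB M r) => if v r.1 = f (M.restrictPa r.1 v) then q r f else 0) p T
  calc (∑ u with u p ∈ T, (M.canonSCM q).joint (glue v u)) * M.cpt p.1 v (v p.1)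
      = (∏ i ∈ M.exo, M.cpt i v (v i)) * ((∑ u : Asg (RB M) with u p ∈ T,
          ∏ r : RVI M, if v r.1 = u r (M.restrictPa r.1 v) then q r (u r) else 0) *
          ∑ f : RB M p, if v p.1 = f (M.restrictPa p.1 v) then q p f else 0) := by
        simp only [joint_canonSCM_glue]
        rw [← Finset.mul_sum, mul_assoc]
        exact congrArg _ (congrArg _ (hq.sum_response_eq hM p v).symm)
    _ = (∏ i ∈ M.exo, M.cpt i v (v i)) *
          ((∑ f ∈ T with f (M.restrictPa p.1 v) = v p.1, q p f) *
            ∏ r : RVI M, M.cpt r.1 v (v r.1)) := by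
        refine congrArg _ (hindep.trans (congrArg₂ _ ?_ ?_))
        · refine (Finset.sum_filter _ _).symm.trans ?_
          rw [Finset.filter_congr fun f _ => eq_comm]
        · exact Finset.prod_congr rfl fun r _ => hq.sum_response_eq hM r v
    _ = M.joint v * ∑ f ∈ T with f (M.restrictPa p.1 v) = v p.1, q p f := by
        rw [joint, ← prod_exo_mul_prod_RVI (M := M)]
        ring

end CanonicalSCM

section Counterfactuals

variable {ν : Type} {Val : ν → Type} [Fintype ν] {M : CM ν Val}

/-- `s` solves the structural equations of the canonical frame of `M` once the variables in `X`
are set to `xv`, the exogenous variables of `M` having their values in `v` and the response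
variables the values `u`. -/
structure IsSolution (M : CM ν Val) (X : Finset ν) (xv v : Asg Val) (u : Asg (RB M))
    (s : Asg Val) : Prop where
  eq_of_mem : ∀ i ∈ X, s i = xv i
  eq_of_mem_exo : ∀ i ∈ M.exo, s i = v i
  eq_response : ∀ p : RVI M, p.1 ∉ X → s p.1 = u p (M.restrictPa p.1 s)

variable [∀ i, Fintype (Val i)] [∀ i, Nonempty (Val i)] {q : (p : RVI M) → RType M p.1 → ℝ}
  {v : Asg Val}

lemma IsSolution.pdo_ne_zero {X : Finset ν} {xv s : Asg Val} {u : Asg (RB M)}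
    (hs : M.IsSolution X xv v u s) (hM : M.WF) (hvu : (M.canonSCM q).joint (glue v u) ≠ 0) :
    (M.canonSCM q).pdo (X.image .inl) (liftAsg xv) (glue s u) ≠ 0 := by
  rw [joint_ne_zero_iff] at hvu
  refine pdo_ne_zero_iff.2 ⟨Finset.forall_mem_image.2 hs.eq_of_mem, ?_⟩
  rintro (j | p) hX
  · by_cases hj : j ∈ M.exo
    · have hv := hvu (.inl j)
      rw [canonSCM_cpt_inl_of_mem hj] at hv ⊢
      have hsv : s j = v j := hs.eq_of_mem_exo j hj
      change M.cpt j s (s j) ≠ 0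
      rwa [hsv, hM.cpt_pa j s v _ (by simp [hM.pa_exo j hj])]
    · have hjX : j ∉ X := fun h => hX (Finset.mem_image_of_mem _ h)
      rw [canonSCM_cpt_inl_RVI ⟨j, hj⟩]
      exact ne_of_eq_of_ne (if_pos (hs.eq_response ⟨j, hj⟩ hjX)) one_ne_zero
  · exact hvu (.inr p)

lemma IsSolution.cfBasic_canonSCM {X Y : Finset ν} {xv yv s : Asg Val} {u : Asg (RB M)}
    (hs : M.IsSolution X xv v u s) (hM : M.WF) (hq : M.IsCanonicalDist q)
    (hvu : (M.canonSCM q).joint (glue v u) ≠ 0) :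
    (M.canonSCM q).cfBasic (X.image .inl) (liftAsg xv) (Y.image .inl) (liftAsg yv) (glue v u) =
      if ∀ i ∈ Y, s i = yv i then 1 else 0 := by
  have hsw : ∀ i ∈ (M.canonSCM q).exo, glue s u i = glue v u i := by
    rintro (j | p) hj
    · exact hs.eq_of_mem_exo j (inl_mem_canonSCM_exo.1 hj)
    · rfl
  rw [(hM.canonSCM hq).cfBasic_eq_ite isSCM_canonSCM (hs.pdo_ne_zero hM hvu) hsw]
  simp only [Finset.forall_mem_image]
  rfl

lemma IsCanonicalDist.extProbCond_univ (hq : M.IsCanonicalDist q) (hM : M.WF) (e : CFEvent ν Val)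
    {s : Asg (RB M) → Asg Val} (hs : ∀ u, M.IsSolution e.X e.xv v u (s u)) :
    extProbCond (M.canonSCM q) [e] univ v =
      (∑ u with ∀ i ∈ e.Y, s u i = e.yv i, (M.canonSCM q).joint (glue v u)) / M.joint v := by
  have hv (v' : Asg Val) (u : Asg (RB M)) :
      (∀ i ∈ univ.image .inl, glue v' u i = (liftAsg v : Asg (SumVal Val (RB M))) i) ↔
        v' = v := by
    simp only [Finset.forall_mem_image, Finset.mem_univ, true_imp_iff]
    exact funext_iff.symm
  rw [extProbCond, cfProbCond, sum_eq_sum_sum_glue, sum_eq_sum_sum_glue]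
  simp only [hv, List.map_cons, List.map_nil, List.prod_cons, List.prod_nil, mul_one]
  rw [Fintype.sum_eq_single v fun v' h => by simp [h],
    Fintype.sum_eq_single v fun v' h => by simp [h]]
  simp only [if_true, hq.sum_joint_eq hM, Finset.sum_filter]
  congr 1
  refine Finset.sum_congr rfl fun u _ => ?_
  by_cases hvu : (M.canonSCM q).joint (glue v u) = 0
  · simp [hvu]
  · rw [liftCFEvent, (hs u).cfBasic_canonSCM hM hq hvu, ite_mul, one_mul, zero_mul]

lemma IsCanonicalDist.extProbCond_univ_of_response (hq : M.IsCanonicalDist q) (hM : M.WF)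
    (hv : M.joint v ≠ 0) (e : CFEvent ν Val) {s : Asg (RB M) → Asg Val}
    (hs : ∀ u, M.IsSolution e.X e.xv v u (s u)) (p : RVI M) (T : Finset (RB M p))
    (hT : ∀ u, (∀ i ∈ e.Y, s u i = e.yv i) ↔ u p ∈ T) :
    extProbCond (M.canonSCM q) [e] univ v =
      (∑ f ∈ T with f (M.restrictPa p.1 v) = v p.1, q p f) / M.cpt p.1 v (v p.1) := by
  rw [hq.extProbCond_univ hM e hs, div_eq_div_iff hv (joint_ne_zero_iff.1 hv p.1),
    mul_comm _ (M.joint v), ← hq.sum_joint_mul_cpt hM v p T,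
    Finset.filter_congr fun u _ => hT u]

end Counterfactuals

section ResponseDistributions

variable {ν : Type} {Val : ν → Type} [Fintype ν] [∀ i, Fintype (Val i)] [∀ i, Nonempty (Val i)]
  {M : CM ν Val}

/-- `g` can serve as the distribution of the response variable of `i` in a canonical SCM for `M`.
That its total mass is `1` follows from `marginal`. -/
structure IsResponseDist (M : CM ν Val) (i : ν) (g : RType M i → ℝ) : Prop where
  nonneg : ∀ f, 0 ≤ g f
  marginal : ∀ (κ : M.PaAsg i) (x : Val i),
    ∑ f : RType M i with f κ = x, g f = M.cpt i (M.extendPa i κ) x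

lemma IsResponseDist.sum_eq_one (hM : M.WF) {i : ν} {g : RType M i → ℝ}
    (hg : M.IsResponseDist i g) : ∑ f, g f = 1 := by
  obtain ⟨κ⟩ : Nonempty (M.PaAsg i) := inferInstance
  rw [← Finset.sum_fiberwise univ (fun f : RType M i => f κ) g]
  simp only [hg.marginal κ, hM.cpt_sum]

lemma WF.isCanonicalDist (hM : M.WF) {q : (p : RVI M) → RType M p.1 → ℝ}
    (hq : ∀ p : RVI M, M.IsResponseDist p.1 (q p)) : M.IsCanonicalDist q :=
  ⟨fun p => (hq p).nonneg, fun p => (hq p).sum_eq_one hM,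
    fun p κ x => ((hq p).marginal κ x).symm⟩

lemma WF.isResponseDist_qGH (hM : M.WF) (p : RVI M) : M.IsResponseDist p.1 (M.qGH p) where
  nonneg f := Finset.prod_nonneg fun κ _ => hM.cpt_nonneg _ _ _
  marginal κ x := by
    have h := sum_filter_mem_prod_mul_sum
      (fun (c : M.PaAsg p.1) y => M.cpt p.1 (M.extendPa p.1 c) y) κ {x}
    simp only [hM.cpt_sum, Finset.prod_const_one, mul_one, Finset.sum_singleton,
      Finset.mem_singleton] at h
    exact h

lemma WF.exists_isCanonicalDist_eq (hM : M.WF) (p : RVI M) {g : RType M p.1 → ℝ}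
    (hg : M.IsResponseDist p.1 g) : ∃ q, M.IsCanonicalDist q ∧ q p = g :=
  ⟨Function.update M.qGH p g, hM.isCanonicalDist <| (Function.forall_update_iff _ _).2
    ⟨hg, fun r _ => hM.isResponseDist_qGH r⟩, Function.update_self p g M.qGH⟩

end ResponseDistributions

end CM

namespace M2

variable {p q px1 : ℝ}

lemma wf (hp0 : 0 ≤ p) (hp1 : p ≤ 1) (hq0 : 0 ≤ q) (hq1 : q ≤ 1) (hpx0 : 0 ≤ px1)
    (hpx1 : px1 ≤ 1) : (M2 p q px1).WF where
  pa_exo i hi := absurd hi (Finset.notMem_empty i)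
  acyclic := by
    rintro (_ | _) j hj
    · exact absurd hj (Finset.notMem_empty j)
    · obtain rfl := Finset.mem_singleton.1 hj
      exact Nat.zero_lt_one
  cpt_pa := by
    rintro (_ | _) w w' x h
    · rfl
    · simp [M2, h false (Finset.mem_singleton_self _)]
  cpt_nonneg := by
    rintro (_ | _) w x <;> simp only [M2] <;> split_ifs <;> linarith
  cpt_sum := by
    rintro (_ | _) w
    · simp [M2]
    · cases h : w false <;> simp [M2, h]

/-- The value `X = b` of the parent of `Y`. -/
def paAsg (p q px1 : ℝ) (b : Bool) : (M2 p q px1).PaAsg true :=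
  (M2 p q px1).restrictPa true fun _ => b

lemma eq_paAsg (κ : (M2 p q px1).PaAsg true) : κ = paAsg p q px1 (κ (xPa p q px1)) := by
  funext ⟨j, hj⟩
  obtain rfl := Finset.mem_singleton.1 hj
  rfl

/-- A response function of `Y` amounts to its values at `X = 0` and `X = 1`. -/
def responseEquiv (p q px1 : ℝ) : (M2 p q px1).RType true ≃ Bool × Bool where
  toFun f := (f (paAsg p q px1 false), f (paAsg p q px1 true))
  invFun y κ := if κ (xPa p q px1) then y.2 else y.1
  left_inv f := by
    funext κ
    rw [eq_paAsg κ]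
    cases κ (xPa p q px1) <;> rfl
  right_inv _ := rfl

lemma responseEquiv_symm_paAsg (y : Bool × Bool) (b : Bool) :
    (responseEquiv p q px1).symm y (paAsg p q px1 b) = if b then y.2 else y.1 :=
  rfl

lemma eq_fId_iff {f : (M2 p q px1).RType true} :
    f = fId p q px1 ↔ f (paAsg p q px1 false) = false ∧ f (paAsg p q px1 true) = true :=
  (responseEquiv p q px1).injective.eq_iff.symm.trans Prod.mk_inj

/-- The distribution of the response variable of `Y` with `P(U_Y = 0) = p₀`, `P(U_Y = 1) = p₁`,
`P(U_Y = 2) = p₂` and `P(U_Y = 3) = p₃`; in terms of the values `(f 0, f 1)` of a response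
function `f`, the codes are `0 = (0, 1)`, `1 = (1, 0)`, `2 = (0, 0)` and `3 = (1, 1)`. -/
def responseDist (p q px1 p₀ p₁ p₂ p₃ : ℝ) : (M2 p q px1).RType true → ℝ := fun f =>
  match responseEquiv p q px1 f with
  | (false, true) => p₀
  | (true, false) => p₁
  | (false, false) => p₂
  | (true, true) => p₃

lemma isResponseDist_responseDist (hM : (M2 p q px1).WF) {p₀ p₁ p₂ p₃ : ℝ} (h₀ : 0 ≤ p₀)
    (h₁ : 0 ≤ p₁) (h₂ : 0 ≤ p₂) (h₃ : 0 ≤ p₃) (hsum : p₀ + p₁ + p₂ + p₃ = 1)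
    (hp : p₀ + p₃ = p) (hq : p₁ + p₃ = q) :
    (M2 p q px1).IsResponseDist true (responseDist p q px1 p₀ p₁ p₂ p₃) where
  nonneg f := by
    unfold responseDist
    split <;> assumption
  marginal κ x := by
    obtain ⟨b, rfl⟩ : ∃ b, κ = paAsg p q px1 b := ⟨_, eq_paAsg κ⟩
    have hcpt : (M2 p q px1).cpt true ((M2 p q px1).extendPa true (paAsg p q px1 b)) x =
        if b then (if x then p else 1 - p) else (if x then q else 1 - q) :=
      hM.cpt_extendPa true (fun _ => b) x
    rw [hcpt, Finset.sum_filter, ← (responseEquiv p q px1).symm.sum_comp, Fintype.sum_prod_type]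
    simp only [Fintype.sum_bool, responseDist, Equiv.apply_symm_apply, responseEquiv_symm_paAsg]
    cases b <;> cases x <;> norm_num <;> linarith

lemma extProbCond_eq (hM : (M2 p q px1).WF)
    {r : (i : CM.RVI (M2 p q px1)) → CM.RType (M2 p q px1) i.1 → ℝ}
    (hr : (M2 p q px1).IsCanonicalDist r) (hXY : (M2 p q px1).joint (fun _ => true) ≠ 0) :
    extProbCond ((M2 p q px1).canonSCM r) [⟨{false}, fun _ => false, {true}, fun _ => false⟩]
        {false, true} (fun _ => true) = r (yRVI p q px1) (fId p q px1) / p := by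
  let s (u : Asg (CM.RB (M2 p q px1))) : Bool → Bool
    | false => false
    | true => u (yRVI p q px1) (paAsg p q px1 false)
  have hs (u) : (M2 p q px1).IsSolution {false} (fun _ => false) (fun _ => true) u (s u) := by
    refine ⟨fun i hi => ?_, fun i hi => absurd hi (Finset.notMem_empty i), ?_⟩
    · obtain rfl := Finset.mem_singleton.1 hi
      rfl
    · rintro ⟨_ | _, _⟩ hX
      · exact absurd (Finset.mem_singleton_self _) hX
      · exact congrArg (u (yRVI p q px1)) (eq_paAsg (CM.restrictPa _ true (s u))).symm
  let T : Finset (CM.RType (M2 p q px1) true) := {f | f (paAsg p q px1 false) = false}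
  have hT (u) : (∀ i ∈ ({true} : Finset Bool), s u i = false) ↔ u (yRVI p q px1) ∈ T :=
    (by simp [s] : _ ↔ _).trans (Finset.mem_filter_univ _).symm
  have huniv : ({false, true} : Finset Bool) = univ := by
    ext b
    simp
  rw [huniv]
  refine (hr.extProbCond_univ_of_response hM hXY ⟨{false}, fun _ => false, {true}, fun _ => false⟩
    hs (yRVI p q px1) T hT).trans (congrArg (· / p) ?_)
  refine (Finset.sum_congr ?_ fun _ _ => rfl).trans (Finset.sum_singleton _ (fId p q px1))
  ext f
  calc _ ↔ f ∈ T ∧ f (paAsg p q px1 true) = true := @Finset.mem_filter _ _ (_) _ _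
    _ ↔ f (paAsg p q px1 false) = false ∧ f (paAsg p q px1 true) = true :=
      and_congr_left' (Finset.mem_filter_univ f)
    _ ↔ f = fId p q px1 := eq_fId_iff.symm
    _ ↔ f ∈ {fId p q px1} := Finset.mem_singleton.symm

lemma joint_true_ne_zero
    (h : ∑ w : Bool → Bool,
      (if w false = true ∧ w true = true then (M2 p q px1).joint w else 0) ≠ 0) :
    (M2 p q px1).joint (fun _ => true) ≠ 0 := by
  rwa [Fintype.sum_eq_single fun _ => true, if_pos ⟨rfl, rfl⟩] at h
  exact fun w hw => if_neg fun hXY => hw (funext (Bool.rec hXY.1 hXY.2))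

end M2

/-- Under the Pearlian semantics, probabilities of counterfactuals in nondeterministic
causal models are not identified by the observational and interventional distributions:
there are canonical SCMs `M'` (with `P(U_Y=0) = p`, `P(U_Y=1) = q`, `P(U_Y=2) = 1−p−q`,
`P(U_Y=3) = 0`) and `M''` (with `P(U_Y=0) = 0`, `P(U_Y=1) = q−p`, `P(U_Y=2) = 1−q`,
`P(U_Y=3) = p`) for `M2`, yet `P_{M'}((Y=0)_{X←0} | X=1, Y=1) = 1` while
`P_{M''}((Y=0)_{X←0} | X=1, Y=1) = 0`. -/
theorem counterfactuals_not_identified (p q px1 : ℝ) (hp : 0 < p) (hpq : p < q)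
    (hq : q < 1) (hpq1 : p + q ≤ 1) (hpx0 : 0 ≤ px1) (hpx1 : px1 ≤ 1)
    (hXY : 0 < ∑ w : Bool → Bool,
      if w false = true ∧ w true = true then (M2 p q px1).joint w else 0) :
    ∃ q1 q2 : (pp : CM.RVI (M2 p q px1)) → CM.RType (M2 p q px1) pp.1 → ℝ,
      (M2 p q px1).IsCanonicalDist q1 ∧ (M2 p q px1).IsCanonicalDist q2 ∧
      q1 (yRVI p q px1) (fId p q px1) = p ∧
      q1 (yRVI p q px1) (fNeg p q px1) = q ∧
      q1 (yRVI p q px1) (fC0 p q px1) = 1 - p - q ∧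
      q1 (yRVI p q px1) (fC1 p q px1) = 0 ∧
      q2 (yRVI p q px1) (fId p q px1) = 0 ∧
      q2 (yRVI p q px1) (fNeg p q px1) = q - p ∧
      q2 (yRVI p q px1) (fC0 p q px1) = 1 - q ∧
      q2 (yRVI p q px1) (fC1 p q px1) = p ∧
      extProbCond ((M2 p q px1).canonSCM q1)
        [⟨{false}, fun _ => false, {true}, fun _ => false⟩]
        {false, true} (fun _ => true) = 1 ∧
      extProbCond ((M2 p q px1).canonSCM q2)
        [⟨{false}, fun _ => false, {true}, fun _ => false⟩]
        {false, true} (fun _ => true) = 0 := by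
  have hq0 : 0 < q := hp.trans hpq
  have hM := M2.wf hp.le (hpq.trans hq).le hq0.le hq.le hpx0 hpx1
  have hjoint := M2.joint_true_ne_zero hXY.ne'
  obtain ⟨q1, hq1, hY1⟩ := hM.exists_isCanonicalDist_eq (yRVI p q px1) <|
    M2.isResponseDist_responseDist hM (p₀ := p) (p₁ := q) (p₂ := 1 - p - q) (p₃ := 0)
      hp.le hq0.le (by linarith) le_rfl (by ring) (by ring) (by ring)
  obtain ⟨q2, hq2, hY2⟩ := hM.exists_isCanonicalDist_eq (yRVI p q px1) <|
    M2.isResponseDist_responseDist hM (p₀ := 0) (p₁ := q - p) (p₂ := 1 - q) (p₃ := p)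
      le_rfl (by linarith) (by linarith) hp.le (by ring) (by ring) (by ring)
  refine ⟨q1, q2, hq1, hq2, congrFun hY1 _, congrFun hY1 _, congrFun hY1 _, congrFun hY1 _,
    congrFun hY2 _, congrFun hY2 _, congrFun hY2 _, congrFun hY2 _, ?_, ?_⟩
  · rw [M2.extProbCond_eq hM hq1 hjoint, hY1]
    exact div_self hp.ne'
  · rw [M2.extProbCond_eq hM hq2 hjoint, hY2]
    exact zero_div p

end
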